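/- Let f(x) = Σ_{j=1}^{L_f} ω_j^f · φ(x; μ_j^f, α_j^f, β_j^f) and g(x) = Σ_{k=1}^{L_g} ω_k^g · φ(x; μ_k^g, α_k^g, β_k^g) be finite mixtures of generalized normal densities with all weights strictly positive and all scales and shapes strictly positive. If min_j β_j^f < min_k β_k^g, then f(x)/g(x) → +∞ as x → +∞ and f(x)/g(x) → +∞ as x → −∞. -/

import Mathlib

open Filter

/-- The generalized normal density with location `μ`, scale `α`, and shape `β`. -/
noncomputable def gnpdf (μ α β x : ℝ) : ℝ :=
  β / (2 * α * Real.Gamma (1 / β)) * Real.exp (-((|x - μ| / α) ^ β))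

/-!
As `|x| → ∞` all the standardized distances `|x - μ| / α` are comparable, so a larger shape gives an
exponent of strictly higher order, hence a density that is negligible against any density of smaller
shape. Every component of `g` is thus negligible against some component of `f`, which in turn is at
most a constant multiple of `f`; summing, `g = o(f)`.
-/

open Asymptotics Bornology

section Asymptotics

variable {X : Type*} {l : Filter X}

theorem tendsto_div_atTop_of_isLittleO_of_pos {f g : X → ℝ} (hgf : g =o[l] f)
    (hf : ∀ᶠ x in l, 0 < f x) (hg : ∀ᶠ x in l, 0 < g x) : Tendsto (fun x ↦ f x / g x) l atTop := by
  have hpos : ∀ᶠ x in l, g x / f x ∈ Set.Ioi 0 := by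
    filter_upwards [hf, hg] with x hfx hgx using div_pos hgx hfx
  have hzero : Tendsto (fun x ↦ g x / f x) l (nhdsWithin 0 (Set.Ioi 0)) :=
    tendsto_nhdsWithin_iff.2 ⟨hgf.tendsto_div_nhds_zero, hpos⟩
  exact hzero.inv_tendsto_nhdsGT_zero.congr fun x ↦ inv_div (g x) (f x)

theorem isBigO_sum_of_nonneg {ι : Type*} {s : Finset ι} {f : ι → X → ℝ} {i : ι}
    (hf : ∀ j ∈ s, 0 ≤ᶠ[l] f j) (hi : i ∈ s) : f i =O[l] fun x ↦ ∑ j ∈ s, f j x := by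
  refine .of_norm_eventuallyLE ?_
  filter_upwards [(eventually_all_finset s).2 hf] with x hx
  have hle : f i x ≤ ∑ j ∈ s, f j x := Finset.single_le_sum (f := fun j ↦ f j x) hx hi
  exact (Real.norm_of_nonneg (hx i hi)).trans_le hle

theorem isLittleO_exp_neg_of_isLittleO {u v : X → ℝ} (huv : u =o[l] v) (hv : Tendsto v l atTop) :
    (fun x ↦ Real.exp (-v x)) =o[l] fun x ↦ Real.exp (-u x) := by
  have hsub : Tendsto (v - u) l atTop :=
    (IsEquivalent.refl.sub_isLittleO huv).symm.tendsto_atTop hv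
  refine Real.isLittleO_exp_comp_exp_comp.2 (hsub.congr fun x ↦ ?_)
  simp only [Pi.sub_apply]
  ring

theorem isLittleO_rpow_rpow_atTop {b c : ℝ} (hbc : b < c) :
    (fun x : ℝ ↦ x ^ b) =o[atTop] fun x ↦ x ^ c := by
  have hone : (fun _ : ℝ ↦ (1 : ℝ)) =o[atTop] fun x ↦ x ^ (c - b) :=
    (isLittleO_const_left_of_ne one_ne_zero).2
      (tendsto_norm_atTop_atTop.comp (tendsto_rpow_atTop (sub_pos.2 hbc)))
  refine ((isBigO_refl (fun x : ℝ ↦ x ^ b) atTop).mul_isLittleO hone).congr'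
    (.of_forall fun x ↦ mul_one _) ?_
  filter_upwards [eventually_gt_atTop 0] with x hx
  rw [← Real.rpow_add hx, add_sub_cancel]

theorem isLittleO_rpow_rpow_of_isBigO {f g : X → ℝ} {b c : ℝ} (hfg : f =O[l] g)
    (hg : Tendsto g l atTop) (hb : 0 ≤ b) (hbc : b < c) :
    (fun x ↦ f x ^ b) =o[l] fun x ↦ g x ^ c :=
  (hfg.rpow hb (hg.eventually_ge_atTop 0)).trans_isLittleO
    ((isLittleO_rpow_rpow_atTop hbc).comp_tendsto hg)

end Asymptotics

section StandardizedDistance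

theorem isTheta_sub_const_id_cobounded {E : Type*} [NormedAddCommGroup E] (c : E) :
    (fun x ↦ x - c) =Θ[cobounded E] id :=
  (IsEquivalent.refl.sub_isLittleO (isLittleO_const_id_cobounded c)).isTheta

theorem isTheta_abs_sub_div_id_cobounded (μ : ℝ) {α : ℝ} (hα : α ≠ 0) :
    (fun x ↦ |x - μ| / α) =Θ[cobounded ℝ] id := by
  simp only [div_eq_inv_mul]
  exact (isTheta_const_mul_left (inv_ne_zero hα)).2 (isTheta_sub_const_id_cobounded μ).norm_left

theorem tendsto_abs_sub_div_cobounded_atTop (μ : ℝ) {α : ℝ} (hα : 0 < α) :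
    Tendsto (fun x ↦ |x - μ| / α) (cobounded ℝ) atTop :=
  (Metric.tendsto_dist_right_cobounded_atTop μ).atTop_div_const hα

end StandardizedDistance

theorem gnpdf_normalization_pos {α β : ℝ} (hα : 0 < α) (hβ : 0 < β) :
    0 < β / (2 * α * Real.Gamma (1 / β)) := by
  have : 0 < Real.Gamma (1 / β) := Real.Gamma_pos_of_pos (one_div_pos.2 hβ)
  positivity

theorem gnpdf_pos (μ : ℝ) {α β : ℝ} (hα : 0 < α) (hβ : 0 < β) (x : ℝ) : 0 < gnpdf μ α β x :=
  mul_pos (gnpdf_normalization_pos hα hβ) (Real.exp_pos _)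

theorem gnpdf_isLittleO_gnpdf_of_shape_lt (μ μ' : ℝ) {α α' β β' : ℝ} (hα : 0 < α) (hα' : 0 < α')
    (hβ : 0 < β) (hββ' : β < β') : gnpdf μ' α' β' =o[cobounded ℝ] gnpdf μ α β := by
  have hdist : Tendsto (fun x ↦ |x - μ'| / α') (cobounded ℝ) atTop :=
    tendsto_abs_sub_div_cobounded_atTop μ' hα'
  have hcomparable : (fun x ↦ |x - μ| / α) =O[cobounded ℝ] fun x ↦ |x - μ'| / α' :=
    ((isTheta_abs_sub_div_id_cobounded μ hα.ne').trans
      (isTheta_abs_sub_div_id_cobounded μ' hα'.ne').symm).isBigO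
  have hexponent : (fun x ↦ (|x - μ| / α) ^ β) =o[cobounded ℝ] fun x ↦ (|x - μ'| / α') ^ β' :=
    isLittleO_rpow_rpow_of_isBigO hcomparable hdist hβ.le hββ'
  have hexp := isLittleO_exp_neg_of_isLittleO hexponent
    ((tendsto_rpow_atTop (hβ.trans hββ')).comp hdist)
  exact (hexp.const_mul_left _).const_mul_right (gnpdf_normalization_pos hα hβ).ne'

/-- The mixture `∑ j, ω j * φ(·; μ j, α j, β j)` of generalized normal densities with weights `ω`;
the weights are not required to sum to `1`. -/
noncomputable def gnMixture {ι : Type*} [Fintype ι] (ω μ α β : ι → ℝ) (x : ℝ) : ℝ :=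
  ∑ j, ω j * gnpdf (μ j) (α j) (β j) x

section Mixture

variable {ι : Type*} [Fintype ι] {ω μ α β : ι → ℝ}

theorem gnMixture_pos [Nonempty ι] (hω : ∀ j, 0 < ω j) (hα : ∀ j, 0 < α j) (hβ : ∀ j, 0 < β j)
    (x : ℝ) : 0 < gnMixture ω μ α β x :=
  Finset.sum_pos (fun j _ ↦ mul_pos (hω j) (gnpdf_pos (μ j) (hα j) (hβ j) x))
    Finset.univ_nonempty

theorem gnpdf_isBigO_gnMixture {l : Filter ℝ} (hω : ∀ j, 0 ≤ ω j) (hα : ∀ j, 0 < α j)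
    (hβ : ∀ j, 0 < β j) {i : ι} (hi : ω i ≠ 0) :
    gnpdf (μ i) (α i) (β i) =O[l] gnMixture ω μ α β :=
  (isBigO_self_const_mul hi _ l).trans <|
    isBigO_sum_of_nonneg (f := fun j x ↦ ω j * gnpdf (μ j) (α j) (β j) x)
      (fun j _ ↦ .of_forall fun x ↦ mul_nonneg (hω j) (gnpdf_pos (μ j) (hα j) (hβ j) x).le)
      (Finset.mem_univ i)

theorem gnMixture_isLittleO {l : Filter ℝ} {u : ℝ → ℝ}
    (h : ∀ j, gnpdf (μ j) (α j) (β j) =o[l] u) : gnMixture ω μ α β =o[l] u :=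
  .fun_sum fun j _ ↦ (h j).const_mul_left (ω j)

end Mixture

theorem mixture_ratio_tendsto_atTop_of_min_shape_lt_general {ι κ : Type*} [Fintype ι] [Fintype κ]
    [Nonempty κ] {ωf μf αf βf : ι → ℝ} {ωg μg αg βg : κ → ℝ}
    (hωf : ∀ j, 0 < ωf j) (hαf : ∀ j, 0 < αf j) (hβf : ∀ j, 0 < βf j)
    (hωg : ∀ k, 0 < ωg k) (hαg : ∀ k, 0 < αg k) (hlt : ∀ k, ∃ j, βf j < βg k) :
    Tendsto (fun x ↦ gnMixture ωf μf αf βf x / gnMixture ωg μg αg βg x) (cobounded ℝ) atTop := by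
  choose j hj using hlt
  have : Nonempty ι := Nonempty.map j inferInstance
  have hβg : ∀ k, 0 < βg k := fun k ↦ (hβf (j k)).trans (hj k)
  have hcomponent : ∀ k, gnpdf (μg k) (αg k) (βg k) =o[cobounded ℝ] gnMixture ωf μf αf βf :=
    fun k ↦ (gnpdf_isLittleO_gnpdf_of_shape_lt (μf (j k)) (μg k) (hαf (j k)) (hαg k)
      (hβf (j k)) (hj k)).trans_isBigO
        (gnpdf_isBigO_gnMixture (fun i ↦ (hωf i).le) hαf hβf (hωf (j k)).ne')
  have hgf : gnMixture ωg μg αg βg =o[cobounded ℝ] gnMixture ωf μf αf βf :=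
    gnMixture_isLittleO hcomponent
  exact tendsto_div_atTop_of_isLittleO_of_pos hgf
    (.of_forall (gnMixture_pos hωf hαf hβf)) (.of_forall (gnMixture_pos hωg hαg hβg))

/-- For finite mixtures `f` and `g` of generalized normal densities with
strictly positive weights, scales and shapes (weights summing to 1), if the minimal
shape parameter of `f` is strictly smaller than that of `g`, then `f/g → +∞` in both
tails. -/
theorem mixture_ratio_tendsto_atTop_of_min_shape_lt
    (Lf Lg : ℕ)
    (ωf μf αf βf : Fin (Lf + 1) → ℝ) (ωg μg αg βg : Fin (Lg + 1) → ℝ)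
    (hωf : ∀ j, 0 < ωf j) (hαf : ∀ j, 0 < αf j) (hβf : ∀ j, 0 < βf j)
    (hωg : ∀ k, 0 < ωg k) (hαg : ∀ k, 0 < αg k) (hβg : ∀ k, 0 < βg k)
    (hsumf : ∑ j, ωf j = 1) (hsumg : ∑ k, ωg k = 1)
    (hmin : Finset.univ.inf' Finset.univ_nonempty βf
          < Finset.univ.inf' Finset.univ_nonempty βg) :
    Tendsto (fun x => (∑ j, ωf j * gnpdf (μf j) (αf j) (βf j) x)
                    / (∑ k, ωg k * gnpdf (μg k) (αg k) (βg k) x)) atTop atTop ∧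
    Tendsto (fun x => (∑ j, ωf j * gnpdf (μf j) (αf j) (βf j) x)
                    / (∑ k, ωg k * gnpdf (μg k) (αg k) (βg k) x)) atBot atTop := by
  have hratio := mixture_ratio_tendsto_atTop_of_min_shape_lt_general (μf := μf) (μg := μg)
    hωf hαf hβf hωg hαg
    (by simpa only [Finset.lt_inf'_iff, Finset.inf'_lt_iff, Finset.mem_univ, true_and,
      forall_const] using hmin)
  exact ⟨hratio.mono_left IsOrderBornology.atTop_le_cobounded,
    hratio.mono_left IsOrderBornology.atBot_le_cobounded⟩
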